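/- Let B be a set of m + p − 1 column indices of the constraint matrix A containing exactly r interdependent variables, and suppose the independent arcs contained in B form a spanning forest of G whose connected components are T_1, …, T_{r−p+1}. Then the columns of A indexed by B have rank m + p − 1 (equivalently, are linearly independent) if and only if the r×r matrix D associated with B and this forest is nonsingular. -/

import Mathlib

open Matrix

noncomputable section

/-- Node–arc incidence matrix of the directed multigraph given by `src`, `tgt`. -/
def incidenceMatrix (m n : ℕ) (src tgt : Fin n → Fin m) : Matrix (Fin m) (Fin n) ℝ :=
  Matrix.of fun i e => if src e = i then (1 : ℝ) else if tgt e = i then -1 else 0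

/-- Interdependence matrix `Q̂`: row `k` has `-α k` in the parent column and `1` in the
child column. -/
def interMatrix (n p : ℕ) (parent child : Fin p → Fin n) (α : Fin p → ℝ) :
    Matrix (Fin p) (Fin n) ℝ :=
  Matrix.of fun k e => if e = parent k then -α k else if e = child k then (1 : ℝ) else 0

/-- The constraint matrix `A = [[Â, 0], [Q̂, I]]`. -/
def constraintMatrix (m n p : ℕ) (src tgt : Fin n → Fin m)
    (parent child : Fin p → Fin n) (α : Fin p → ℝ) :
    Matrix (Fin m ⊕ Fin p) (Fin n ⊕ Fin p) ℝ :=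
  Matrix.fromBlocks (incidenceMatrix m n src tgt) 0 (interMatrix n p parent child α) 1

/-- A column index of `A` is an *interdependent variable* if it is a slack variable or an
arc appearing in some interdependence pair. -/
def interVar (n p : ℕ) (parent child : Fin p → Fin n) : Fin n ⊕ Fin p → Prop
  | Sum.inl e => ∃ k, parent k = e ∨ child k = e
  | Sum.inr _ => True

/-- `δ_e^T`. -/
def deltaCoef (m n : ℕ) (src tgt : Fin n → Fin m) (e : Fin n) (T : Finset (Fin m)) : ℝ :=
  if src e ∈ T ∧ tgt e ∉ T then 1 else if src e ∉ T ∧ tgt e ∈ T then -1 else 0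

/-- The `r × r` matrix `D` associated with a candidate basis: rows are indexed by the
trees `T_1, …, T_{r-p}` followed by the `p` interdependencies; columns are indexed by
the interdependent variables of `B`, enumerated by `col`. -/
def Dmat (m n p : ℕ) (src tgt : Fin n → Fin m) (parent child : Fin p → Fin n)
    (α : Fin p → ℝ) (r : ℕ) (T : Fin (r - p + 1) → Finset (Fin m))
    (col : Fin r → Fin n ⊕ Fin p) :
    Matrix (Fin (r - p) ⊕ Fin p) (Fin r) ℝ :=
  Matrix.of fun row j =>
    match row, col j with
    | Sum.inl h, Sum.inl e => deltaCoef m n src tgt e (T h.castSucc)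
    | Sum.inl _, Sum.inr _ => 0
    | Sum.inr k, Sum.inl e => interMatrix n p parent child α k e
    | Sum.inr k, Sum.inr k' => if k = k' then (1 : ℝ) else 0

/-- The independent arcs contained in `B` form an acyclic undirected subgraph of `G`. -/
def NoIndepCycle (m n p : ℕ) (src tgt : Fin n → Fin m) (parent child : Fin p → Fin n)
    (B : Finset (Fin n ⊕ Fin p)) : Prop :=
  ¬ ∃ (k : ℕ) (_ : 1 ≤ k) (e : Fin k → Fin n) (v : Fin (k + 1) → Fin m),
      Function.Injective e ∧
      (∀ i, ¬ interVar n p parent child (Sum.inl (e i))) ∧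
      (∀ i, Sum.inl (e i) ∈ B) ∧
      v 0 = v (Fin.last k) ∧
      ∀ i : Fin k, ({src (e i), tgt (e i)} : Set (Fin m)) = {v i.castSucc, v i.succ}

/-- Reachability in the undirected subgraph formed by the independent arcs of `B`. -/
def indepReach (m n p : ℕ) (src tgt : Fin n → Fin m) (parent child : Fin p → Fin n)
    (B : Finset (Fin n ⊕ Fin p)) : Fin m → Fin m → Prop :=
  Relation.ReflTransGen fun a b => ∃ e, Sum.inl e ∈ B ∧
    ¬ interVar n p parent child (Sum.inl e) ∧
    ((src e = a ∧ tgt e = b) ∨ (src e = b ∧ tgt e = a))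

/-- Reduced cost vector `c^π = c̄ − Aᵀ π` (slack variables get cost `0`). -/
def reducedCost (m n p : ℕ) (src tgt : Fin n → Fin m) (parent child : Fin p → Fin n)
    (α : Fin p → ℝ) (c : Fin n → ℝ) (π : Fin m ⊕ Fin p → ℝ) : Fin n ⊕ Fin p → ℝ :=
  fun j => Sum.elim c (fun _ => (0 : ℝ)) j
    - (constraintMatrix m n p src tgt parent child α)ᵀ.mulVec π j


/-!
The column of an independent arc `e` is `1_{src e} - 1_{tgt e}`. Along a forest these columns are
linearly independent, and they span exactly the vectors that vanish on the side constraints and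
sum to zero over every tree, that is, the kernel of the map contracting each tree to a node.
Hence the columns of `B` are independent iff the contracted columns of its interdependent
variables are. The contracted columns belong to the constraint matrix of the contracted network;
its node rows sum to zero, so the row of the last tree may be dropped, and what is left is `D`.
-/

/-- A closed trail of the directed multigraph `src, tgt`: pairwise distinct arcs `e`, traversed
in either direction through the nodes `v`, returning to the first node. -/
structure IsClosedTrail {V E : Type*} (src tgt : E → V) {k : ℕ} (e : Fin k → E)
    (v : Fin (k + 1) → V) : Prop where
  injective : Function.Injective e
  closed : v 0 = v (Fin.last k)
  joins (i : Fin k) : ({src (e i), tgt (e i)} : Set V) = {v i.castSucc, v i.succ}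

/-- The arcs in `F` form a forest: no nonempty closed trail of the undirected multigraph runs
inside `F`. In particular `F` has no loops and no parallel arcs. -/
def IsArcForest {V E : Type*} (src tgt : E → V) (F : Set E) : Prop :=
  ∀ (k : ℕ) (e : Fin k → E) (v : Fin (k + 1) → V),
    1 ≤ k → (∀ i, e i ∈ F) → ¬ IsClosedTrail src tgt e v

/-- The undirected simple graph underlying the set of arcs `F`; loops are dropped and parallel
arcs merged. -/
def arcGraph {V E : Type*} (src tgt : E → V) (F : Set E) : SimpleGraph V :=
  SimpleGraph.fromEdgeSet ((fun e => s(src e, tgt e)) '' F)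

/-- The node–arc incidence matrix over `R`, with column `1_{src e} - 1_{tgt e}` at the arc `e`;
the column of a loop is zero. -/
def signedIncidence (R : Type*) {V E : Type*} [Ring R] [DecidableEq V] (src tgt : E → V) :
    Matrix V E R :=
  Matrix.of fun i e => (Pi.single (src e) 1 - Pi.single (tgt e) 1 : V → R) i

/-- The constraint matrix of a network flow problem with side constraints `Q` and one slack
variable for each of them. -/
def networkMatrix {R V E P : Type*} [Ring R] [DecidableEq V] [DecidableEq P] (src tgt : E → V)
    (Q : Matrix P E R) : Matrix (V ⊕ P) (E ⊕ P) R :=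
  Matrix.fromBlocks (signedIncidence R src tgt) 0 Q 1

/-- The push-forward of functions along `g`, which sums a function over the fibres of `g`. -/
def pushforward (R : Type*) {X Y : Type*} [CommRing R] [Fintype X] [DecidableEq Y] (g : X → Y) :
    (X → R) →ₗ[R] (Y → R) :=
  Fintype.linearCombination R fun x => Pi.single (g x) 1

section LinearAlgebra

variable {R : Type*} [CommRing R]

theorem linearIndepOn_union_iff_of_ker_eq_span {ι M N : Type*} [AddCommGroup M] [Module R M]
    [AddCommGroup N] [Module R N] {f : ι → M} {s t : Set ι} {φ : M →ₗ[R] N}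
    (hs : LinearIndepOn R f s) (hst : Disjoint s t)
    (hker : LinearMap.ker φ = Submodule.span R (f '' s)) :
    LinearIndepOn R f (s ∪ t) ↔ LinearIndepOn R (φ ∘ f) t := by
  have hlift : LinearMap.ker ((Submodule.span R (f '' s)).liftQ φ hker.ge) = ⊥ :=
    Submodule.ker_liftQ_eq_bot _ _ _ hker.le
  rw [← hs.quotient_iff_union hst]
  exact (LinearMap.linearIndependent_iff _ hlift).symm

variable {X Y : Type*} [Fintype X] [DecidableEq X] [DecidableEq Y] {g : X → Y}

theorem pushforward_single (x : X) : pushforward R g (Pi.single x 1) = Pi.single (g x) 1 := by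
  simp [pushforward]

/-- Modulo `W`, the basis vector at `x` depends only on `g x`, so `W.mkQ` factors through
`pushforward R g`. -/
theorem ker_pushforward_le [Finite Y] {W : Submodule R (X → R)}
    (hW : ∀ x y, g x = g y → (Pi.single x 1 - Pi.single y 1 : X → R) ∈ W) :
    LinearMap.ker (pushforward R g) ≤ W := by
  have := Fintype.ofFinite Y
  let b : X → (X → R) ⧸ W := fun x => W.mkQ (Pi.single x 1)
  have hb : b.FactorsThrough g := fun x y hxy => (Submodule.Quotient.eq W).2 (hW x y hxy)
  have hfactor :
      Fintype.linearCombination R (Function.extend g b 0) ∘ₗ pushforward R g = W.mkQ := by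
    refine (Pi.basisFun R X).ext fun x => ?_
    rw [Pi.basisFun_apply, LinearMap.comp_apply, pushforward_single,
      Fintype.linearCombination_apply_single, one_smul, hb.extend_apply]
  intro a ha
  rw [← W.ker_mkQ, ← hfactor, LinearMap.mem_ker, LinearMap.comp_apply, LinearMap.mem_ker.1 ha,
    map_zero]

theorem linearIndependent_dropLast_iff {ι P : Type*} {q : ℕ} {v : ι → Fin (q + 1) ⊕ P → R}
    (hv : ∀ i, ∑ h, v i (Sum.inl h) = 0) :
    LinearIndependent R (fun i => v i ∘ Sum.map Fin.castSucc id) ↔ LinearIndependent R v := by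
  let total : (Fin (q + 1) ⊕ P → R) →ₗ[R] R := ∑ h, LinearMap.proj (Sum.inl h)
  let drop : (Fin (q + 1) ⊕ P → R) →ₗ[R] (Fin q ⊕ P → R) :=
    LinearMap.funLeft R R (Sum.map Fin.castSucc id)
  have htotal : Submodule.span R (Set.range v) ≤ LinearMap.ker total := by
    rw [Submodule.span_le]
    rintro _ ⟨i, rfl⟩
    simpa [total] using hv i
  refine drop.linearIndependent_iff_of_disjoint (v := v) (Submodule.disjoint_def.2 ?_)
  intro x hx hdrop
  have hx0 (y : Fin q ⊕ P) : x (Sum.map Fin.castSucc id y) = 0 := congrFun hdrop y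
  have hsum : ∑ h, x (Sum.inl h) = 0 := by simpa [total] using htotal hx
  have hcast (h : Fin q) : x (Sum.inl h.castSucc) = 0 := hx0 (Sum.inl h)
  have hlast : x (Sum.inl (Fin.last q)) = 0 := by
    simpa only [Fin.sum_univ_castSucc, hcast, Finset.sum_const_zero, zero_add] using hsum
  ext (h | k)
  · exact Fin.lastCases hlast hcast h
  · exact hx0 (Sum.inr k)

end LinearAlgebra

section ArcGraph

variable {V E : Type*} {src tgt : E → V} {F : Set E}

theorem arcGraph_adj {a b : V} :
    (arcGraph src tgt F).Adj a b ↔ (∃ e ∈ F, s(src e, tgt e) = s(a, b)) ∧ a ≠ b := by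
  simp only [arcGraph, SimpleGraph.fromEdgeSet_adj, Set.mem_image]

theorem reachable_src_tgt {e : E} (he : e ∈ F) :
    (arcGraph src tgt F).Reachable (src e) (tgt e) := by
  by_cases hne : src e = tgt e
  · rw [hne]
  · exact (arcGraph_adj.2 ⟨⟨e, he, rfl⟩, hne⟩).reachable

theorem exists_arcs_of_isTrail {a b : V} {w : (arcGraph src tgt F).Walk a b} (hw : w.IsTrail) :
    ∃ arc : Fin w.length → E, Function.Injective arc ∧
      ∀ i, arc i ∈ F ∧ s(src (arc i), tgt (arc i)) = s(w.getVert i, w.getVert (i + 1)) := by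
  have hadj (i : Fin w.length) := (arcGraph_adj.1 (w.adj_getVert_succ i.2)).1
  choose arc harcF harc using hadj
  refine ⟨arc, fun i j hij => Fin.ext ?_, fun i => ⟨harcF i, harc i⟩⟩
  have hi : i.1 < w.edges.length := by simp
  have hj : j.1 < w.edges.length := by simp
  refine (hw.edges_nodup.getElem_inj_iff (hi := hi) (hj := hj)).1 ?_
  rw [w.getElem_edges hi, w.getElem_edges hj, ← harc, ← harc, hij]

/-- A trail from `src e` to `tgt e` avoiding `e` is closed up by `e`. -/
theorem IsArcForest.not_reachable_diff_singleton (hF : IsArcForest src tgt F) {e : E}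
    (he : e ∈ F) : ¬ (arcGraph src tgt (F \ {e})).Reachable (src e) (tgt e) := by
  intro hreach
  obtain ⟨w, hw⟩ := hreach.exists_isPath
  obtain ⟨arc, harc_inj, harc⟩ := exists_arcs_of_isTrail hw.isTrail
  refine hF (w.length + 1) (Fin.snoc arc e) (Fin.snoc (fun i => w.getVert i) (src e))
    (Nat.le_add_left 1 _) (Fin.forall_fin_succ'.2 ⟨fun i => ?_, ?_⟩)
    ⟨Fin.snoc_injective_iff.2 ⟨harc_inj, ?_⟩, ?_, Fin.forall_fin_succ'.2 ⟨fun i => ?_, ?_⟩⟩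
  · simpa only [Fin.snoc_castSucc] using (harc i).1.1
  · simpa only [Fin.snoc_last] using he
  · rintro ⟨i, hi⟩
    exact (harc i).1.2 hi
  · rw [Fin.snoc_last, ← Fin.castSucc_zero, Fin.snoc_castSucc]
    exact w.getVert_zero
  · rw [Fin.snoc_castSucc, Fin.snoc_castSucc, Fin.succ_castSucc, Fin.snoc_castSucc,
      Set.pair_eq_pair_iff, ← Sym2.eq_iff]
    exact (harc i).2
  · rw [Fin.snoc_last, Fin.snoc_castSucc, Fin.succ_last, Fin.snoc_last, Fin.val_last,
      w.getVert_length, Set.pair_comm]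

theorem sub_mem_of_reachable {M S : Type*} [AddCommGroup M] [SetLike S M] [AddSubgroupClass S M]
    {W : S} {b : V → M} (hW : ∀ e ∈ F, b (src e) - b (tgt e) ∈ W) {i j : V}
    (hij : (arcGraph src tgt F).Reachable i j) : b i - b j ∈ W := by
  obtain ⟨w⟩ := hij
  induction w with
  | nil => simpa only [sub_self] using zero_mem W
  | @cons i k j hik _ ih =>
    obtain ⟨⟨e, he, hends⟩, -⟩ := arcGraph_adj.1 hik
    have hstep : b i - b k ∈ W := by
      rcases Sym2.eq_iff.1 hends with ⟨rfl, rfl⟩ | ⟨rfl, rfl⟩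
      · exact hW e he
      · simpa using neg_mem (hW e he)
    simpa using add_mem hstep ih

/-- Deleting `e` from the forest separates its ends, so the indicator function of one side is a
linear form that is `1` on the arc `e` and vanishes on all other arcs of the forest. -/
theorem IsArcForest.linearIndepOn_sub {R M : Type*} [CommRing R] [AddCommGroup M] [Module R M]
    {b : V → M} (hF : IsArcForest src tgt F) (hb : LinearIndependent R b) :
    LinearIndepOn R (fun e => b (src e) - b (tgt e)) F := by
  classical
  let side (e : E) : V → R :=
    fun i => if (arcGraph src tgt (F \ {e})).Reachable (src e) i then 1 else 0
  let form (e : F) : Module.Dual R (V →₀ R) := Finsupp.linearCombination R (side e)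
  have hsingle : LinearIndependent R fun e : F =>
      (Finsupp.single (src e) 1 - Finsupp.single (tgt e) 1 : V →₀ R) := by
    refine .of_pairwise_dual_eq_zero_one _ form (fun e a hea => ?_) fun e => ?_
    · have ha : (a : E) ∈ F \ {e.1} := ⟨a.2, fun h => hea (Subtype.ext h.symm)⟩
      have hside : (arcGraph src tgt (F \ {e.1})).Reachable (src e) (src a) ↔
          (arcGraph src tgt (F \ {e.1})).Reachable (src e) (tgt a) :=
        ⟨fun h => h.trans (reachable_src_tgt ha), fun h => h.trans (reachable_src_tgt ha).symm⟩
      simp [form, side, hside]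
    · simp [form, side, hF.not_reachable_diff_singleton e.2]
  simpa [LinearIndepOn, Function.comp_def] using! hsingle.map' _ (LinearMap.ker_eq_bot.2 hb)

end ArcGraph

section NetworkMatrix

variable {R V E P : Type*} [CommRing R] [DecidableEq V] [DecidableEq P] {src tgt : E → V}
  {Q : Matrix P E R}

theorem networkMatrix_col_inr (k : P) :
    (networkMatrix src tgt Q).col (Sum.inr k) = Pi.single (Sum.inr k) 1 := by
  ext (i | k')
  · simp [networkMatrix]
  · simp [networkMatrix, Matrix.one_apply, Pi.single_apply]

theorem networkMatrix_col_inl [Fintype P] (e : E) :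
    (networkMatrix src tgt Q).col (Sum.inl e) =
      Pi.single (Sum.inl (src e)) 1 - Pi.single (Sum.inl (tgt e)) 1 +
        ∑ k, Q k e • Pi.single (Sum.inr k) (1 : R) := by
  ext (i | k)
  · simp [networkMatrix, signedIncidence, Pi.single_apply]
  · simp [networkMatrix, Pi.single_apply]

theorem sum_networkMatrix_col [Fintype V] (j : E ⊕ P) :
    ∑ i, (networkMatrix src tgt Q).col j (Sum.inl i) = 0 := by
  rcases j with e | k <;> simp [networkMatrix, signedIncidence]

theorem pushforward_networkMatrix_col [Fintype V] [Fintype P] {C : Type*} [DecidableEq C]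
    (c : V → C) (j : E ⊕ P) :
    pushforward R (Sum.map c id) ((networkMatrix src tgt Q).col j) =
      (networkMatrix (c ∘ src) (c ∘ tgt) Q).col j := by
  rcases j with e | k
  · simp only [networkMatrix_col_inl, map_add, map_sub, map_sum, map_smul, pushforward_single,
      Sum.map_inl, Sum.map_inr, id_eq, Function.comp_apply]
  · simp only [networkMatrix_col_inr, pushforward_single, Sum.map_inr, id_eq]

variable {F : Set E}

theorem networkMatrix_col_inl_of_eq_zero {e : E} (he : Q.col e = 0) :
    (networkMatrix src tgt Q).col (Sum.inl e) =
      Pi.single (Sum.inl (src e)) 1 - Pi.single (Sum.inl (tgt e)) 1 := by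
  have hQ (k : P) : Q k e = 0 := congrFun he k
  ext (i | k)
  · simp [networkMatrix, signedIncidence, Pi.single_apply]
  · simp [networkMatrix, hQ]

theorem linearIndepOn_networkMatrix_col (hF : IsArcForest src tgt F)
    (hQ : ∀ e ∈ F, Q.col e = 0) :
    LinearIndepOn R (networkMatrix src tgt Q).col (Sum.inl '' F) := by
  have hb : LinearIndependent R fun i : V => (Pi.single (Sum.inl i) 1 : V ⊕ P → R) :=
    (Pi.linearIndependent_single_one (V ⊕ P) R).comp Sum.inl Sum.inl_injective
  refine LinearIndepOn.image_of_comp _ _ ((hF.linearIndepOn_sub hb).congr fun e he => ?_)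
  exact (networkMatrix_col_inl_of_eq_zero (hQ e he)).symm

theorem ker_pushforward_eq_span [Fintype V] [Fintype P] {C : Type*} [Finite C] [DecidableEq C]
    {c : V → C} (hQ : ∀ e ∈ F, Q.col e = 0)
    (hc : ∀ i j, (arcGraph src tgt F).Reachable i j ↔ c i = c j) :
    LinearMap.ker (pushforward R (Sum.map c (id : P → P))) =
      Submodule.span R ((networkMatrix src tgt Q).col '' (Sum.inl '' F)) := by
  apply le_antisymm
  · have harc (e) (he : e ∈ F) :
        (Pi.single (Sum.inl (src e)) 1 - Pi.single (Sum.inl (tgt e)) 1 : V ⊕ P → R) ∈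
          Submodule.span R ((networkMatrix src tgt Q).col '' (Sum.inl '' F)) := by
      rw [← networkMatrix_col_inl_of_eq_zero (hQ e he)]
      exact Submodule.subset_span ⟨_, ⟨e, he, rfl⟩, rfl⟩
    refine ker_pushforward_le ?_
    rintro (i | k) (j | l) hij
    · exact sub_mem_of_reachable (b := fun i => Pi.single (Sum.inl i) 1) harc
        ((hc i j).2 (Sum.inl_injective hij))
    · cases hij
    · cases hij
    · rw [show k = l from Sum.inr_injective hij, sub_self]
      exact Submodule.zero_mem _
  · rw [Submodule.span_le]
    rintro _ ⟨_, ⟨e, he, rfl⟩, rfl⟩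
    have hends : c (src e) = c (tgt e) := (hc _ _).1 (reachable_src_tgt he)
    rw [networkMatrix_col_inl_of_eq_zero (hQ e he), SetLike.mem_coe, LinearMap.mem_ker, map_sub,
      pushforward_single, pushforward_single, Sum.map_inl, Sum.map_inl, hends, sub_self]

/-- The labelling `c` names the trees, and the matrix on the right is the constraint matrix of the
network with every tree contracted to a node, without the row of the last tree. -/
theorem basis_iff_Dmat_nonsingular_general [Finite V] [Finite P] {q : ℕ} {c : V → Fin (q + 1)}
    {J : Set (E ⊕ P)} (hF : IsArcForest src tgt F) (hQ : ∀ e ∈ F, Q.col e = 0)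
    (hc : ∀ i j, (arcGraph src tgt F).Reachable i j ↔ c i = c j)
    (hJ : Disjoint (Sum.inl '' F) J) :
    LinearIndepOn R (networkMatrix src tgt Q).col (Sum.inl '' F ∪ J) ↔
      LinearIndepOn R
        ((networkMatrix (c ∘ src) (c ∘ tgt) Q).submatrix (Sum.map Fin.castSucc id) id).col J := by
  have := Fintype.ofFinite V
  have := Fintype.ofFinite P
  have hindep : LinearIndepOn R (networkMatrix src tgt Q).col (Sum.inl '' F) :=
    linearIndepOn_networkMatrix_col hF hQ
  have hcontract : pushforward R (Sum.map c id) ∘ (networkMatrix src tgt Q).col =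
      (networkMatrix (c ∘ src) (c ∘ tgt) Q).col := funext (pushforward_networkMatrix_col c)
  rw [linearIndepOn_union_iff_of_ker_eq_span hindep hJ (ker_pushforward_eq_span hQ hc), hcontract]
  exact (linearIndependent_dropLast_iff
    (v := fun j : J => (networkMatrix (c ∘ src) (c ∘ tgt) Q).col j) fun j =>
      sum_networkMatrix_col j.1).symm

end NetworkMatrix

section ConstraintMatrix

variable {m n p : ℕ} {src tgt : Fin n → Fin m} {parent child : Fin p → Fin n} {α : Fin p → ℝ}
  {B : Finset (Fin n ⊕ Fin p)}

/-- The independent arcs contained in `B`. -/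
def indepArcs (parent child : Fin p → Fin n) (B : Finset (Fin n ⊕ Fin p)) : Set (Fin n) :=
  {e | Sum.inl e ∈ B ∧ ¬ interVar n p parent child (Sum.inl e)}

/-- The interdependent variables contained in `B`. -/
def interVars (parent child : Fin p → Fin n) (B : Finset (Fin n ⊕ Fin p)) :
    Set (Fin n ⊕ Fin p) :=
  {j | j ∈ B ∧ interVar n p parent child j}

theorem disjoint_indepArcs_interVars :
    Disjoint (Sum.inl '' indepArcs parent child B) (interVars parent child B) := by
  rw [Set.disjoint_left]
  rintro _ ⟨e, he, rfl⟩ hj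
  exact he.2 hj.2

theorem indepArcs_union_interVars :
    Sum.inl '' indepArcs parent child B ∪ interVars parent child B = B := by
  ext (e | k)
  · by_cases h : interVar n p parent child (Sum.inl e) <;> simp [indepArcs, interVars, h]
  · simp [interVars, interVar]

theorem interMatrix_col_eq_zero {e : Fin n} (he : e ∈ indepArcs parent child B) :
    (interMatrix n p parent child α).col e = 0 := by
  have hnot (k : Fin p) : parent k ≠ e ∧ child k ≠ e := not_or.1 (not_exists.1 he.2 k)
  ext k
  simp [interMatrix, (hnot k).1.symm, (hnot k).2.symm]

theorem isArcForest_indepArcs (hforest : NoIndepCycle m n p src tgt parent child B) :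
    IsArcForest src tgt (indepArcs parent child B) := fun k e v hk he hcycle =>
  hforest ⟨k, hk, e, v, hcycle.injective, fun i => (he i).2, fun i => (he i).1, hcycle.closed,
    hcycle.joins⟩

theorem reachable_arcGraph_indepArcs_iff (hst : ∀ e, src e ≠ tgt e) {i j : Fin m} :
    (arcGraph src tgt (indepArcs parent child B)).Reachable i j ↔
      indepReach m n p src tgt parent child B i j := by
  have hadj : (arcGraph src tgt (indepArcs parent child B)).Adj = fun a b =>
      ∃ e, Sum.inl e ∈ B ∧ ¬ interVar n p parent child (Sum.inl e) ∧
        ((src e = a ∧ tgt e = b) ∨ (src e = b ∧ tgt e = a)) := by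
    ext a b
    simp only [arcGraph_adj, indepArcs, Set.mem_ofPred_eq, Sym2.eq_iff, and_assoc]
    grind
  rw [SimpleGraph.reachable_iff_reflTransGen, hadj, indepReach]

theorem constraintMatrix_eq_networkMatrix (hst : ∀ e, src e ≠ tgt e) :
    constraintMatrix m n p src tgt parent child α =
      networkMatrix src tgt (interMatrix n p parent child α) := by
  have hincidence : incidenceMatrix m n src tgt = signedIncidence ℝ src tgt := by
    ext i e
    simp only [incidenceMatrix, signedIncidence, Matrix.of_apply, Pi.sub_apply, Pi.single_apply]
    grind
  rw [constraintMatrix, networkMatrix, hincidence]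

theorem Dmat_eq_submatrix {r : ℕ} {T : Fin (r - p + 1) → Finset (Fin m)}
    {c : Fin m → Fin (r - p + 1)} (hTc : ∀ i h, i ∈ T h ↔ c i = h) (col : Fin r → Fin n ⊕ Fin p) :
    Dmat m n p src tgt parent child α r T col =
      (networkMatrix (c ∘ src) (c ∘ tgt) (interMatrix n p parent child α)).submatrix
        (Sum.map Fin.castSucc id) col := by
  ext (h | k) j <;> rcases hj : col j with e | l
  · simp only [Dmat, networkMatrix, signedIncidence, deltaCoef, hj, hTc, Matrix.of_apply,
      Matrix.submatrix_apply, Sum.map_inl, Matrix.fromBlocks_apply₁₁, Pi.sub_apply,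
      Pi.single_apply, Function.comp_apply]
    grind
  · simp [Dmat, networkMatrix, hj]
  · simp [Dmat, networkMatrix, hj]
  · simp [Dmat, networkMatrix, hj, Matrix.one_apply]

theorem exists_treeLabel {κ : Type*} {T : κ → Finset (Fin m)} (hst : ∀ e, src e ≠ tgt e)
    (hTdisj : ∀ h h', h ≠ h' → Disjoint (T h) (T h'))
    (hTcomp : ∀ i j, indepReach m n p src tgt parent child B i j ↔ ∃ h, i ∈ T h ∧ j ∈ T h) :
    ∃ c : Fin m → κ, (∀ i h, i ∈ T h ↔ c i = h) ∧
      ∀ i j, (arcGraph src tgt (indepArcs parent child B)).Reachable i j ↔ c i = c j := by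
  have hcover (i : Fin m) : ∃ h, i ∈ T h :=
    ((hTcomp i i).1 Relation.ReflTransGen.refl).imp fun _ => And.left
  choose c hmem using hcover
  have hTc (i : Fin m) (h : κ) : i ∈ T h ↔ c i = h := by
    refine ⟨fun hi => ?_, fun hi => hi ▸ hmem i⟩
    by_contra hne
    exact Finset.disjoint_left.1 (hTdisj _ _ hne) (hmem i) hi
  refine ⟨c, hTc, fun i j => ?_⟩
  rw [reachable_arcGraph_indepArcs_iff hst, hTcomp]
  simp only [hTc, exists_eq_left', eq_comm (a := c j)]

end ConstraintMatrix

/-- For a set `B` of `m + p − 1` columns of `A` containing exactly `r`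
interdependent variables whose independent arcs form a spanning forest with components
`T_1, …, T_{r−p+1}`, the columns of `A` indexed by `B` are linearly independent iff the
associated `r × r` matrix `D` is nonsingular (its columns are linearly independent). -/
theorem basis_iff_Dmat_nonsingular (m n p : ℕ) (src tgt : Fin n → Fin m) (hst : ∀ e, src e ≠ tgt e)
    (parent child : Fin p → Fin n) (α : Fin p → ℝ)
    (hpc : ∀ k k' : Fin p, parent k ≠ child k')
    (hpinj : Function.Injective parent) (hcinj : Function.Injective child)
    (B : Finset (Fin n ⊕ Fin p)) (hBcard : B.card = m + p - 1)
    (r : ℕ) (hpr : p ≤ r)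
    (T : Fin (r - p + 1) → Finset (Fin m))
    (hTdisj : ∀ h h' : Fin (r - p + 1), h ≠ h' → Disjoint (T h) (T h'))
    (hTne : ∀ h, (T h).Nonempty)
    (hforest : NoIndepCycle m n p src tgt parent child B)
    (hTcomp : ∀ i j : Fin m,
      indepReach m n p src tgt parent child B i j ↔ ∃ h, i ∈ T h ∧ j ∈ T h)
    (col : Fin r → Fin n ⊕ Fin p)
    (hcolinj : Function.Injective col)
    (hcolrange : ∀ j : Fin n ⊕ Fin p,
      j ∈ Set.range col ↔ j ∈ B ∧ interVar n p parent child j) :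
    LinearIndependent ℝ (fun j : B =>
        (constraintMatrix m n p src tgt parent child α)ᵀ j.1) ↔
      LinearIndependent ℝ (fun j : Fin r =>
        (Dmat m n p src tgt parent child α r T col)ᵀ j) := by
  obtain ⟨c, hTc, hc⟩ := exists_treeLabel hst hTdisj hTcomp
  have hcol : Set.range col = interVars parent child B := Set.ext hcolrange
  have hgeneral := basis_iff_Dmat_nonsingular_general (R := ℝ) (isArcForest_indepArcs hforest)
    (fun _ => interMatrix_col_eq_zero (α := α)) hc disjoint_indepArcs_interVars
  rw [indepArcs_union_interVars, ← hcol, linearIndepOn_range_iff hcolinj] at hgeneral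
  rw [constraintMatrix_eq_networkMatrix hst, Dmat_eq_submatrix hTc]
  exact hgeneral
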